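/- arXiv:2310.07207 — 4 statements merged into one kernel-verified Lean document; each statement's English description precedes it below -/
import Mathlib

section
/- Self-consistency condition for the protagonist safety value function (Theorem 1, eq. (14)): for every feedback policy π : S → U and every state x ∈ S, V^π(x) = min{ h(x), min_{a∈A} V^π(f(x, π(x), a)) }. -/
/-- Closed-loop trajectory: `traj f π μ x t` is the state at time `t` starting from `x`. -/
def traj {S U A : Type*} (f : S → U → A → S) (π : S → U) (μ : S → A) (x : S) : ℕ → S
  | 0 => x
  | t + 1 =>
    let y := traj f π μ x t
    f y (π y) (μ y)

/-- Safety value function for a protagonist policy `π` and an adversary policy `μ`. -/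
noncomputable def Vpm {S U A : Type*} (f : S → U → A → S) (h : S → ℝ)
    (π : S → U) (μ : S → A) (x : S) : ℝ :=
  ⨅ t : ℕ, h (traj f π μ x t)

/-- Safety value function for a protagonist policy `π` (worst-case adversary). -/
noncomputable def Vp {S U A : Type*} (f : S → U → A → S) (h : S → ℝ)
    (π : S → U) (x : S) : ℝ :=
  ⨅ μ : S → A, Vpm f h π μ x

/-- Optimal safety value function. -/
noncomputable def Vstar {S U A : Type*} (f : S → U → A → S) (h : S → ℝ) (x : S) : ℝ :=
  ⨆ π : S → U, Vp f h π x

/-!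
The states visited from `x` under `π` and some memoryless adversary are exactly those reachable
from `x` when the adversary chooses its disturbance afresh at every step, because a path that
revisits a state can be shortcut at the repetition. Hence `V^π(x)` is the infimum of `h` over the
states reachable from `x`, and a reachable state is either `x` itself or reachable from one of the
successors of `x`.
-/

open Relation Set

section ClosedLoop

variable {S U A : Type*} {f : S → U → A → S} {h : S → ℝ} {π : S → U} {μ ν : S → A} {x y z : S}

theorem traj_eq_iterate (f : S → U → A → S) (π : S → U) (μ : S → A) (x : S) (t : ℕ) :
    traj f π μ x t = (fun y => f y (π y) (μ y))^[t] x := by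
  induction t with
  | zero => rfl
  | succ t ih => rw [Function.iterate_succ_apply', ← ih, traj]

theorem traj_add (f : S → U → A → S) (π : S → U) (μ : S → A) (x : S) (s t : ℕ) :
    traj f π μ x (s + t) = traj f π μ (traj f π μ x s) t := by
  simp only [traj_eq_iterate, add_comm s t, Function.iterate_add_apply]

theorem traj_succ' (f : S → U → A → S) (π : S → U) (μ : S → A) (x : S) (t : ℕ) :
    traj f π μ x (t + 1) = traj f π μ (f x (π x) (μ x)) t := by
  simp only [traj_eq_iterate, Function.iterate_succ_apply]

theorem traj_congr {t : ℕ} (hμν : ∀ s < t, ν (traj f π μ x s) = μ (traj f π μ x s)) :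
    traj f π ν x t = traj f π μ x t := by
  induction t with
  | zero => rfl
  | succ t ih =>
    simp only [traj, ih fun s hs => hμν s (hs.trans t.lt_succ_self), hμν t t.lt_succ_self]

/-- The one-step transition relation of the system controlled by `π`, with the disturbance left
free. Its reflexive transitive closure `ReflTransGen (ClosedLoopStep f π)` is reachability under an
adversary that need not be a feedback policy. -/
def ClosedLoopStep (f : S → U → A → S) (π : S → U) (y z : S) : Prop :=
  ∃ a, f y (π y) a = z

theorem reflTransGen_traj (f : S → U → A → S) (π : S → U) (μ : S → A) (x : S) (t : ℕ) :
    ReflTransGen (ClosedLoopStep f π) x (traj f π μ x t) := by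
  induction t with
  | zero => exact .refl
  | succ t ih => exact ih.tail ⟨μ (traj f π μ x t), rfl⟩

theorem exists_traj_eq_of_closedLoopStep (hxy : ClosedLoopStep f π x y) {t : ℕ}
    (hyz : traj f π μ y t = z) : ∃ (ν : S → A) (s : ℕ), traj f π ν x s = z := by
  classical
  obtain ⟨a, rfl⟩ := hxy
  by_cases hvisit : ∃ s < t, traj f π μ (f x (π x) a) s = x
  · obtain ⟨s, hst, hs⟩ := hvisit
    refine ⟨μ, t - s, ?_⟩
    rw [← hyz, ← Nat.add_sub_cancel' hst.le, traj_add, hs, Nat.add_sub_cancel_left]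
  · push Not at hvisit
    refine ⟨Function.update μ x a, t + 1, ?_⟩
    rw [traj_succ', Function.update_self, ← hyz]
    exact traj_congr fun s hs => Function.update_of_ne (hvisit s hs) a μ

theorem exists_traj_eq_iff_reflTransGen [Nonempty A] :
    (∃ (μ : S → A) (t : ℕ), traj f π μ x t = z) ↔ ReflTransGen (ClosedLoopStep f π) x z := by
  constructor
  · rintro ⟨μ, t, rfl⟩
    exact reflTransGen_traj f π μ x t
  · intro hxz
    induction hxz using ReflTransGen.head_induction_on with
    | refl => exact ⟨Classical.arbitrary (S → A), 0, rfl⟩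
    | head hxy _ ih =>
      obtain ⟨μ, t, hyz⟩ := ih
      exact exists_traj_eq_of_closedLoopStep hxy hyz

theorem le_Vpm_iff (hh : BddBelow (range h)) {c : ℝ} :
    c ≤ Vpm f h π μ x ↔ ∀ t, c ≤ h (traj f π μ x t) :=
  le_ciInf_iff (hh.mono (range_comp_subset_range (traj f π μ x) h))

theorem bddBelow_range_Vpm (hh : BddBelow (range h)) (f : S → U → A → S) (π : S → U) (x : S) :
    BddBelow (range fun μ : S → A => Vpm f h π μ x) := by
  obtain ⟨c, hc⟩ := hh
  exact ⟨c, forall_mem_range.2 fun μ => le_ciInf fun t => hc (mem_range_self _)⟩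

theorem le_Vp_iff [Nonempty A] (hh : BddBelow (range h)) {c : ℝ} :
    c ≤ Vp f h π x ↔ ∀ y, ReflTransGen (ClosedLoopStep f π) x y → c ≤ h y := by
  rw [Vp, le_ciInf_iff (bddBelow_range_Vpm hh f π x)]
  simp only [le_Vpm_iff hh, ← exists_traj_eq_iff_reflTransGen]
  constructor
  · rintro hc _ ⟨μ, t, rfl⟩
    exact hc μ t
  · exact fun hc μ t => hc _ ⟨μ, t, rfl⟩

theorem bddBelow_range_Vp [Nonempty A] (hh : BddBelow (range h)) (f : S → U → A → S) (π : S → U) :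
    BddBelow (range (Vp f h π)) := by
  have ⟨c, hc⟩ := hh
  exact ⟨c, forall_mem_range.2 fun x => (le_Vp_iff hh).2 fun y _ => hc (mem_range_self y)⟩

theorem forall_reflTransGen_closedLoopStep_iff {p : S → Prop} :
    (∀ y, ReflTransGen (ClosedLoopStep f π) x y → p y) ↔
      p x ∧ ∀ a y, ReflTransGen (ClosedLoopStep f π) (f x (π x) a) y → p y := by
  constructor
  · exact fun hp => ⟨hp x .refl, fun a y hy => hp y (.head ⟨a, rfl⟩ hy)⟩
  · rintro ⟨hx, hsucc⟩ y hxy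
    obtain rfl | ⟨_, ⟨a, rfl⟩, hy⟩ := hxy.cases_head
    · exact hx
    · exact hsucc a y hy

theorem self_consistency_protagonist_general [Nonempty A] (f : S → U → A → S)
    (hh : BddBelow (range h)) (π : S → U) (x : S) :
    Vp f h π x = min (h x) (⨅ a : A, Vp f h π (f x (π x) a)) := by
  have hbdd : BddBelow (range fun a => Vp f h π (f x (π x) a)) :=
    (bddBelow_range_Vp hh f π).mono (range_comp_subset_range (f x (π x)) (Vp f h π))
  refine eq_of_forall_le_iff fun c => ?_
  calc c ≤ Vp f h π x
      ↔ ∀ y, ReflTransGen (ClosedLoopStep f π) x y → c ≤ h y := le_Vp_iff hh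
    _ ↔ c ≤ h x ∧ ∀ a y, ReflTransGen (ClosedLoopStep f π) (f x (π x) a) y → c ≤ h y :=
      forall_reflTransGen_closedLoopStep_iff
    _ ↔ c ≤ min (h x) (⨅ a : A, Vp f h π (f x (π x) a)) := by
      simp only [le_min_iff, le_ciInf_iff hbdd, le_Vp_iff hh]

end ClosedLoop

theorem self_consistency_protagonist {S U A : Type*} [Fintype S] [Nonempty S] [Fintype U] [Nonempty U] [Fintype A] [Nonempty A]
    (f : S → U → A → S) (h : S → ℝ)
    (π : S → U) (x : S) :
    Vp f h π x = min (h x) (⨅ a : A, Vp f h π (f x (π x) a)) :=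
  self_consistency_protagonist_general f (finite_range h).bddBelow π x
end

section
/- Contraction property of the optimal safety self-consistency operator (Theorem 2, part 1, for T): for all functions V, W : S → ℝ, ‖T(V) − T(W)‖_∞ ≤ γ · ‖V − W‖_∞. -/
/-- Safety self-consistency operator for fixed protagonist `π` and adversary `μ`. -/
noncomputable def Tpm {S U A : Type*} (γ : ℝ) (f : S → U → A → S) (h : S → ℝ)
    (π : S → U) (μ : S → A) (V : S → ℝ) (x : S) : ℝ :=
  (1 - γ) * h x + γ * min (h x) (V (f x (π x) (μ x)))

/-- Safety self-consistency operator for fixed protagonist `π` (worst-case adversary). -/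
noncomputable def Tp {S U A : Type*} (γ : ℝ) (f : S → U → A → S) (h : S → ℝ)
    (π : S → U) (V : S → ℝ) (x : S) : ℝ :=
  (1 - γ) * h x + γ * min (h x) (⨅ a : A, V (f x (π x) a))

/-- Optimal safety self-consistency operator. -/
noncomputable def Topt {S U A : Type*} (γ : ℝ) (f : S → U → A → S) (h : S → ℝ)
    (V : S → ℝ) (x : S) : ℝ :=
  (1 - γ) * h x + γ * min (h x) (⨆ u : U, ⨅ a : A, V (f x u a))

theorem ciSup_le_ciSup_add {α ι : Type*} [ConditionallyCompleteLattice α] [Add α] [AddRightMono α]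
    [Nonempty ι] {F G : ι → α} {c : α} (hG : BddAbove (Set.range G))
    (hFG : ∀ i, F i ≤ G i + c) : ⨆ i, F i ≤ (⨆ i, G i) + c :=
  ciSup_le fun i => (hFG i).trans (by gcongr; exact le_ciSup hG i)

theorem ciInf_le_ciInf_add {α ι : Type*} [ConditionallyCompleteLattice α] [AddGroup α]
    [AddRightMono α] [Nonempty ι] {F G : ι → α} {c : α} (hF : BddBelow (Set.range F))
    (hFG : ∀ i, F i ≤ G i + c) : ⨅ i, F i ≤ (⨅ i, G i) + c :=
  sub_le_iff_le_add.mp <| le_ciInf fun i =>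
    sub_le_iff_le_add.mpr <| (ciInf_le hF i).trans (hFG i)

section Maximin

variable {S U A : Type*} [Nonempty A]

theorem bddAbove_range_ciInf_comp {α : Type*} [ConditionallyCompleteLattice α] {V : S → α}
    (hbelow : BddBelow (Set.range V)) (habove : BddAbove (Set.range V)) (g : U → A → S) :
    BddAbove (Set.range fun u => ⨅ a, V (g u a)) := by
  obtain ⟨M, hM⟩ := habove
  refine ⟨M, Set.forall_mem_range.mpr fun u => ?_⟩
  obtain ⟨a⟩ := ‹Nonempty A›
  have hbelow_u : BddBelow (Set.range fun a => V (g u a)) :=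
    hbelow.mono (Set.range_comp_subset_range (g u) V)
  exact (ciInf_le hbelow_u a).trans (hM (Set.mem_range_self _))

variable [Nonempty U]

theorem ciSup_ciInf_comp_le_add {α : Type*} [ConditionallyCompleteLattice α] [AddGroup α]
    [AddRightMono α] {V W : S → α} {c : α} (hV : BddBelow (Set.range V))
    (hW : BddAbove (Set.range W)) (hVW : ∀ y, V y ≤ W y + c) (g : U → A → S) :
    ⨆ u, ⨅ a, V (g u a) ≤ (⨆ u, ⨅ a, W (g u a)) + c := by
  have hW_below : BddBelow (Set.range W) := by
    obtain ⟨m, hm⟩ := hV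
    exact ⟨m - c, Set.forall_mem_range.mpr fun y =>
      sub_le_iff_le_add.mpr <| (hm (Set.mem_range_self y)).trans (hVW y)⟩
  exact ciSup_le_ciSup_add (bddAbove_range_ciInf_comp hW_below hW g) fun u =>
    ciInf_le_ciInf_add (hV.mono (Set.range_comp_subset_range (g u) V)) fun a => hVW (g u a)

theorem abs_ciSup_ciInf_comp_sub_le {V W : S → ℝ} (hV : Bornology.IsBounded (Set.range V))
    (hW : Bornology.IsBounded (Set.range W)) (g : U → A → S) :
    |(⨆ u, ⨅ a, V (g u a)) - ⨆ u, ⨅ a, W (g u a)| ≤ ⨆ y, |V y - W y| := by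
  have hbdd : BddAbove (Set.range fun y => |V y - W y|) := by
    obtain ⟨C, hC⟩ := hV.exists_norm_le
    obtain ⟨D, hD⟩ := hW.exists_norm_le
    exact ⟨C + D, Set.forall_mem_range.mpr fun y => (abs_sub _ _).trans <|
      add_le_add (hC _ (Set.mem_range_self y)) (hD _ (Set.mem_range_self y))⟩
  have hdist (y : S) : |V y - W y| ≤ ⨆ y, |V y - W y| := le_ciSup hbdd y
  rw [abs_sub_le_iff, sub_le_iff_le_add', sub_le_iff_le_add']
  exact ⟨ciSup_ciInf_comp_le_add hV.bddBelow hW.bddAbove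
      (fun y => sub_le_iff_le_add'.mp (abs_sub_le_iff.mp (hdist y)).1) g,
    ciSup_ciInf_comp_le_add hW.bddBelow hV.bddAbove
      (fun y => sub_le_iff_le_add'.mp (abs_sub_le_iff.mp (hdist y)).2) g⟩

end Maximin

theorem abs_Topt_sub_Topt_le {S U A : Type*} {γ : ℝ} (hγ : 0 ≤ γ) (f : S → U → A → S) (h : S → ℝ)
    (V W : S → ℝ) (x : S) :
    |Topt γ f h V x - Topt γ f h W x|
      ≤ γ * |(⨆ u, ⨅ a, V (f x u a)) - ⨆ u, ⨅ a, W (f x u a)| := by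
  rw [Topt, Topt, add_sub_add_left_eq_sub, ← mul_sub, abs_mul, abs_of_nonneg hγ,
    min_comm (h x), min_comm (h x)]
  exact mul_le_mul_of_nonneg_left (abs_inf_sub_inf_le_abs _ _ (h x)) hγ

theorem contraction_Topt_general {S U A : Type*} [Nonempty S] [Nonempty U] [Nonempty A]
    (f : S → U → A → S) (h : S → ℝ) {γ : ℝ} (hγ : 0 ≤ γ) {V W : S → ℝ}
    (hV : Bornology.IsBounded (Set.range V)) (hW : Bornology.IsBounded (Set.range W)) :
    (⨆ x : S, |Topt γ f h V x - Topt γ f h W x|) ≤ γ * ⨆ x : S, |V x - W x| :=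
  ciSup_le fun x => (abs_Topt_sub_Topt_le hγ f h V W x).trans <|
    mul_le_mul_of_nonneg_left (abs_ciSup_ciInf_comp_sub_le hV hW (f x)) hγ

theorem contraction_Topt {S U A : Type*} [Fintype S] [Nonempty S] [Fintype U] [Nonempty U] [Fintype A] [Nonempty A]
    (f : S → U → A → S) (h : S → ℝ)
    {γ : ℝ} (hγ : γ ∈ Set.Ioo (0 : ℝ) 1)
    (V W : S → ℝ) :
    (⨆ x : S, |Topt γ f h V x - Topt γ f h W x|) ≤ γ * ⨆ x : S, |V x - W x| :=
  contraction_Topt_general f h hγ.1.le (Set.finite_range V).isBounded (Set.finite_range W).isBounded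
end

section
/- Approximation by the discounted fixed point, joint-policy case (Proposition 1 for T^{π,μ}): fix feedback policies π : S → U and μ : S → A. For every γ ∈ (0,1), the operator T^{π,μ} (with discount γ) has a unique fixed point V_γ : S → ℝ, and for every x ∈ S, V_γ(x) tends to V^{π,μ}(x) as γ tends to 1 from within (0,1). -/
/-!
Unrolling a fixed point of `Tpm` along the trajectory shows that it is the value of an optimal
stopping problem: the infimum over `t` of `(1 - γ) ∑_{i < t} γ ^ i h (x_i) + γ ^ t h (x_t)`. This
formula gives existence, and it bounds every fixed point from above by a quantity which tends to
`h (x_t)` as `γ → 1`.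

The remaining inequalities, uniqueness and `Vpm ≤ V_γ`, come from a comparison principle between
subsolutions `V ≤ T V` and supersolutions `T W ≤ W`: if `c` bounds `h` and `W` from below, then
concavity of `T` and the weight `1 - γ` on `h` improve `(1 - θ) V + θ c ≤ W` to the same inequality
with `γ θ` in place of `θ`. Starting from `θ = 1` and iterating gives `V ≤ W`.
-/

open Filter Set Topology

section

variable {S U A : Type*} {f : S → U → A → S} {h : S → ℝ} {π : S → U} {μ : S → A}
  {γ : ℝ} {V W : S → ℝ}

theorem traj_step (x : S) (t : ℕ) :
    traj f π μ (f x (π x) (μ x)) t = traj f π μ x (t + 1) := by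
  induction t with
  | zero => rfl
  | succ t ih => exact congrArg (fun y => f y (π y) (μ y)) ih

theorem Vpm_le (hh : BddBelow (range h)) (x : S) (t : ℕ) :
    Vpm f h π μ x ≤ h (traj f π μ x t) :=
  ciInf_le (hh.mono (range_comp_subset_range (traj f π μ x) h)) t

theorem Vpm_le_Vpm_step (hh : BddBelow (range h)) (x : S) :
    Vpm f h π μ x ≤ Vpm f h π μ (f x (π x) (μ x)) :=
  le_ciInf fun t => traj_step (f := f) x t ▸ Vpm_le hh x (t + 1)

theorem Tpm_eq_min (hγ : 0 ≤ γ) (V : S → ℝ) (x : S) :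
    Tpm γ f h π μ V x = min (h x) ((1 - γ) * h x + γ * V (f x (π x) (μ x))) := by
  rw [Tpm, mul_min_of_nonneg _ _ hγ, ← min_add_add_left]
  congr 1
  ring

theorem Vpm_le_Tpm_Vpm (hγ : γ ∈ Icc 0 1) (hh : BddBelow (range h)) :
    Vpm f h π μ ≤ Tpm γ f h π μ (Vpm f h π μ) := by
  intro x
  have le_h : Vpm f h π μ x ≤ h x := Vpm_le hh x 0
  have le_min_step := le_min le_h (Vpm_le_Vpm_step (f := f) (π := π) (μ := μ) hh x)
  calc Vpm f h π μ x = (1 - γ) * Vpm f h π μ x + γ * Vpm f h π μ x := by ring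
    _ ≤ Tpm γ f h π μ (Vpm f h π μ) x :=
      add_le_add (mul_le_mul_of_nonneg_left le_h (sub_nonneg.2 hγ.2))
        (mul_le_mul_of_nonneg_left le_min_step hγ.1)

theorem convexCombo_Tpm_le_Tpm (hγ : γ ∈ Icc 0 1) {θ c : ℝ} (hθ : θ ∈ Icc 0 1)
    (hc : ∀ x, c ≤ h x) (hVW : ∀ x, (1 - θ) * V x + θ * c ≤ W x) (x : S) :
    (1 - γ * θ) * Tpm γ f h π μ V x + γ * θ * c ≤ Tpm γ f h π μ W x := by
  unfold Tpm
  set y := f x (π x) (μ x)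
  set m := min (h x) (V y)
  have m_le_h : m ≤ h x := min_le_left _ _
  have combo_le_h : (1 - θ) * m + θ * c ≤ h x :=
    calc (1 - θ) * m + θ * c ≤ (1 - θ) * h x + θ * h x :=
          add_le_add (mul_le_mul_of_nonneg_left m_le_h (sub_nonneg.2 hθ.2))
            (mul_le_mul_of_nonneg_left (hc x) hθ.1)
      _ = h x := by ring
  have combo_le_W : (1 - θ) * m + θ * c ≤ W y :=
    calc (1 - θ) * m + θ * c ≤ (1 - θ) * V y + θ * c :=
          add_le_add_left (mul_le_mul_of_nonneg_left (min_le_right _ _) (sub_nonneg.2 hθ.2)) _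
      _ ≤ W y := hVW y
  have gain : 0 ≤ γ * θ * (1 - γ) * (h x - m) :=
    mul_nonneg (mul_nonneg (mul_nonneg hγ.1 hθ.1) (sub_nonneg.2 hγ.2)) (sub_nonneg.2 m_le_h)
  calc (1 - γ * θ) * ((1 - γ) * h x + γ * m) + γ * θ * c
      ≤ (1 - γ) * h x + γ * ((1 - θ) * m + θ * c) := by linarith
    _ ≤ (1 - γ) * h x + γ * min (h x) (W y) :=
      add_le_add_right (mul_le_mul_of_nonneg_left (le_min combo_le_h combo_le_W) hγ.1) _

theorem le_of_le_Tpm_of_Tpm_le (hγ : γ ∈ Ico 0 1) (hh : BddBelow (range h))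
    (hW : BddBelow (range W)) (hV_sub : V ≤ Tpm γ f h π μ V) (hW_super : Tpm γ f h π μ W ≤ W) :
    V ≤ W := by
  obtain ⟨a, ha⟩ := hh
  obtain ⟨b, hb⟩ := hW
  set c := min a b
  have c_le_h (x : S) : c ≤ h x := (min_le_left a b).trans (ha (mem_range_self x))
  have c_le_W (x : S) : c ≤ W x := (min_le_right a b).trans (hb (mem_range_self x))
  have pow_mem (n : ℕ) : γ ^ n ∈ Icc 0 1 := ⟨pow_nonneg hγ.1 n, pow_le_one₀ hγ.1 hγ.2.le⟩
  have combo_le (n : ℕ) : ∀ x, (1 - γ ^ n) * V x + γ ^ n * c ≤ W x := by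
    induction n with
    | zero => simpa using c_le_W
    | succ n ih =>
      intro x
      calc (1 - γ ^ (n + 1)) * V x + γ ^ (n + 1) * c
          ≤ (1 - γ ^ (n + 1)) * Tpm γ f h π μ V x + γ ^ (n + 1) * c :=
            add_le_add_left
              (mul_le_mul_of_nonneg_left (hV_sub x) (sub_nonneg.2 (pow_mem (n + 1)).2)) _
        _ ≤ Tpm γ f h π μ W x := by
            rw [pow_succ']
            exact convexCombo_Tpm_le_Tpm (Ico_subset_Icc_self hγ) (pow_mem n) c_le_h ih x
        _ ≤ W x := hW_super x
  intro x
  have pow_tendsto := tendsto_pow_atTop_nhds_zero_of_lt_one hγ.1 hγ.2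
  have combo_tendsto : Tendsto (fun n => (1 - γ ^ n) * V x + γ ^ n * c) atTop (𝓝 (V x)) := by
    simpa using ((pow_tendsto.const_sub 1).mul_const (V x)).add (pow_tendsto.mul_const c)
  exact le_of_tendsto' combo_tendsto fun n => combo_le n x

/-- Discounted payoff of the trajectory from `x` stopped at time `t`: the average of
`h (x_0), …, h (x_t)` in which time `i < t` has weight `(1 - γ) γ ^ i` and the stopping time `t`
carries all the remaining weight `γ ^ t`. -/
noncomputable def stoppedPayoff (γ : ℝ) (f : S → U → A → S) (h : S → ℝ) (π : S → U) (μ : S → A)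
    (x : S) (t : ℕ) : ℝ :=
  (1 - γ) * ∑ i ∈ Finset.range t, γ ^ i * h (traj f π μ x i) + γ ^ t * h (traj f π μ x t)

theorem stoppedPayoff_zero (x : S) : stoppedPayoff γ f h π μ x 0 = h x := by
  simp [stoppedPayoff, traj]

theorem stoppedPayoff_succ (x : S) (t : ℕ) :
    stoppedPayoff γ f h π μ x (t + 1) =
      (1 - γ) * h x + γ * stoppedPayoff γ f h π μ (f x (π x) (μ x)) t := by
  simp only [stoppedPayoff, traj_step, Finset.sum_range_succ', pow_succ', mul_assoc,
    ← Finset.mul_sum, pow_zero, traj]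
  ring

theorem le_stoppedPayoff (hγ : γ ∈ Icc 0 1) {c : ℝ} (hc : ∀ x, c ≤ h x) (x : S) (t : ℕ) :
    c ≤ stoppedPayoff γ f h π μ x t := by
  induction t generalizing x with
  | zero => exact stoppedPayoff_zero (f := f) x ▸ hc x
  | succ t ih =>
    rw [stoppedPayoff_succ]
    calc c = (1 - γ) * c + γ * c := by ring
      _ ≤ _ := add_le_add (mul_le_mul_of_nonneg_left (hc x) (sub_nonneg.2 hγ.2))
        (mul_le_mul_of_nonneg_left (ih _) hγ.1)

theorem bddBelow_range_stoppedPayoff (hγ : γ ∈ Icc 0 1) (hh : BddBelow (range h)) (x : S) :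
    BddBelow (range (stoppedPayoff γ f h π μ x)) := by
  obtain ⟨c, hc⟩ := hh
  exact ⟨c, forall_mem_range.2 (le_stoppedPayoff hγ (forall_mem_range.1 hc) x)⟩

theorem le_stoppedPayoff_of_le_Tpm (hγ : 0 ≤ γ) (hV : V ≤ Tpm γ f h π μ V) (x : S) (t : ℕ) :
    V x ≤ stoppedPayoff γ f h π μ x t := by
  have le_min_step (x : S) := (hV x).trans_eq (Tpm_eq_min hγ V x)
  induction t generalizing x with
  | zero => exact (le_min_step x).trans ((min_le_left _ _).trans_eq (stoppedPayoff_zero x).symm)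
  | succ t ih =>
    calc V x ≤ (1 - γ) * h x + γ * V (f x (π x) (μ x)) := (le_min_step x).trans (min_le_right _ _)
      _ ≤ (1 - γ) * h x + γ * stoppedPayoff γ f h π μ (f x (π x) (μ x)) t :=
        add_le_add_right (mul_le_mul_of_nonneg_left (ih _) hγ) _
      _ = stoppedPayoff γ f h π μ x (t + 1) := (stoppedPayoff_succ x t).symm

theorem tendsto_stoppedPayoff (x : S) (t : ℕ) :
    Tendsto (fun γ => stoppedPayoff γ f h π μ x t) (𝓝 1) (𝓝 (h (traj f π μ x t))) := by
  have continuous_payoff : Continuous fun γ => stoppedPayoff γ f h π μ x t := by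
    unfold stoppedPayoff
    fun_prop
  simpa [stoppedPayoff] using continuous_payoff.tendsto 1

/-- Value of the optimal stopping problem with payoffs `stoppedPayoff`; it is the fixed point of
`Tpm` with discount `γ`. -/
noncomputable def discountedValue (γ : ℝ) (f : S → U → A → S) (h : S → ℝ) (π : S → U)
    (μ : S → A) (x : S) : ℝ :=
  ⨅ t : ℕ, stoppedPayoff γ f h π μ x t

theorem bddBelow_range_discountedValue (hγ : γ ∈ Icc 0 1) (hh : BddBelow (range h)) :
    BddBelow (range (discountedValue γ f h π μ)) := by
  obtain ⟨c, hc⟩ := hh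
  exact ⟨c, forall_mem_range.2 fun x =>
    le_ciInf (le_stoppedPayoff hγ (forall_mem_range.1 hc) x)⟩

theorem Tpm_discountedValue (hγ : γ ∈ Icc 0 1) (hh : BddBelow (range h)) :
    Tpm γ f h π μ (discountedValue γ f h π μ) = discountedValue γ f h π μ := by
  funext x
  have value_le (x : S) (t : ℕ) : discountedValue γ f h π μ x ≤ stoppedPayoff γ f h π μ x t :=
    ciInf_le (bddBelow_range_stoppedPayoff hγ hh x) t
  rw [Tpm_eq_min hγ.1]
  refine le_antisymm (le_ciInf fun t => ?_) (le_min ?_ ?_)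
  · cases t with
    | zero => exact (min_le_left _ _).trans_eq (stoppedPayoff_zero x).symm
    | succ t =>
      rw [stoppedPayoff_succ]
      exact (min_le_right _ _).trans
        (add_le_add_right (mul_le_mul_of_nonneg_left (value_le _ t) hγ.1) _)
  · exact (value_le x 0).trans_eq (stoppedPayoff_zero x)
  · rw [discountedValue, discountedValue, Real.mul_iInf_of_nonneg hγ.1, ← sub_le_iff_le_add']
    refine le_ciInf fun t => sub_le_iff_le_add'.2 ?_
    exact (value_le x (t + 1)).trans_eq (stoppedPayoff_succ x t)

theorem existsUnique_bddBelow_Tpm_eq (hγ : γ ∈ Ico 0 1) (hh : BddBelow (range h)) :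
    ∃! W : S → ℝ, BddBelow (range W) ∧ Tpm γ f h π μ W = W := by
  have hγ' := Ico_subset_Icc_self hγ
  refine ⟨discountedValue γ f h π μ,
    ⟨bddBelow_range_discountedValue hγ' hh, Tpm_discountedValue hγ' hh⟩, ?_⟩
  rintro W ⟨hW_bdd, hW⟩
  have hV := Tpm_discountedValue (f := f) (π := π) (μ := μ) hγ' hh
  exact le_antisymm
    (le_of_le_Tpm_of_Tpm_le hγ hh (bddBelow_range_discountedValue hγ' hh) hW.ge hV.le)
    (le_of_le_Tpm_of_Tpm_le hγ hh hW_bdd hV.ge hW.le)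

theorem tendsto_Vpm_of_Tpm_eq (hh : BddBelow (range h)) {Vγ : ℝ → S → ℝ}
    (hVγ : ∀ γ ∈ Ioo (0 : ℝ) 1, BddBelow (range (Vγ γ)) ∧ Tpm γ f h π μ (Vγ γ) = Vγ γ) (x : S) :
    Tendsto (fun γ => Vγ γ x) (𝓝[Ioo 0 1] 1) (𝓝 (Vpm f h π μ x)) := by
  refine tendsto_order.2 ⟨fun a ha => ?_, fun a ha => ?_⟩
  · filter_upwards [self_mem_nhdsWithin] with γ hγ
    obtain ⟨V_bdd, V_fixed⟩ := hVγ γ hγ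
    exact ha.trans_le (le_of_le_Tpm_of_Tpm_le (Ioo_subset_Ico_self hγ) hh V_bdd
      (Vpm_le_Tpm_Vpm (Ioo_subset_Icc_self hγ) hh) V_fixed.le x)
  · obtain ⟨t, ht⟩ := exists_lt_of_ciInf_lt ha
    have payoff_lt : ∀ᶠ γ in 𝓝[Ioo 0 1] 1, stoppedPayoff γ f h π μ x t < a :=
      ((tendsto_stoppedPayoff x t).mono_left nhdsWithin_le_nhds).eventually_lt_const ht
    filter_upwards [self_mem_nhdsWithin, payoff_lt] with γ hγ payoff_lt_a
    exact (le_stoppedPayoff_of_le_Tpm hγ.1.le (hVγ γ hγ).2.ge x t).trans_lt payoff_lt_a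

theorem discounted_approximation_joint_general (f : S → U → A → S) (h : S → ℝ)
    (hh : BddBelow (range h)) (π : S → U) (μ : S → A) :
    (∀ γ ∈ Ioo (0 : ℝ) 1, ∃! W : S → ℝ, BddBelow (range W) ∧ Tpm γ f h π μ W = W) ∧
    (∀ Vγ : ℝ → S → ℝ,
      (∀ γ ∈ Ioo (0 : ℝ) 1, BddBelow (range (Vγ γ)) ∧ Tpm γ f h π μ (Vγ γ) = Vγ γ) →
      ∀ x : S, Tendsto (fun γ => Vγ γ x) (𝓝[Ioo 0 1] 1) (𝓝 (Vpm f h π μ x))) :=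
  ⟨fun _ hγ => existsUnique_bddBelow_Tpm_eq (Ioo_subset_Ico_self hγ) hh,
    fun _ hVγ => tendsto_Vpm_of_Tpm_eq hh hVγ⟩

end

theorem discounted_approximation_joint {S U A : Type*} [Fintype S] [Nonempty S] [Fintype U] [Nonempty U] [Fintype A] [Nonempty A]
    (f : S → U → A → S) (h : S → ℝ)
    (π : S → U) (μ : S → A) :
    (∀ γ ∈ Set.Ioo (0 : ℝ) 1, ∃! W : S → ℝ, Tpm γ f h π μ W = W) ∧
    (∀ Vγ : ℝ → S → ℝ, (∀ γ ∈ Set.Ioo (0 : ℝ) 1, Tpm γ f h π μ (Vγ γ) = Vγ γ) →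
      ∀ x : S, Filter.Tendsto (fun γ => Vγ γ x) (nhdsWithin 1 (Set.Ioo (0 : ℝ) 1))
        (nhds (Vpm f h π μ x))) := by
  simpa only [(finite_range _).bddBelow, true_and] using
    discounted_approximation_joint_general f h (finite_range h).bddBelow π μ
end

section
/- Monotone improvement chain of policy iteration (relation (37) in the proof of Theorem 3): suppose V_k : S → ℝ is the fixed point of T^{π_k} (i.e., T^{π_k}(V_k) = V_k), the improved policy π_{k+1} : S → U satisfies T^{π_{k+1}}(V_k) = T(V_k), V_{k+1} : S → ℝ is the fixed point of T^{π_{k+1}}, and V* : S → ℝ is the fixed point of T. Then for every x ∈ S, V_k(x) ≤ (T(V_k))(x) ≤ V_{k+1}(x) ≤ V*(x). -/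
/-!
Both operators satisfy Blackwell's two conditions on bounded functions: they are monotone, and
raising the argument by a constant `c ≥ 0` raises the value by at most `γ * c`. A bounded
subsolution `V ≤ T V` therefore lies below every bounded supersolution `T W ≤ W`, because a
positive supremum `c` of `V - W` would satisfy `c ≤ γ * c`.

Since `Tp π ≤ Topt`, the function `Vk` is a subsolution of `Topt`, hence by the choice of `πk1` of
`Tp πk1`, so `Vk ≤ Vk1`; applying `Tp πk1` to this inequality gives `Topt Vk ≤ Vk1`. Likewise `Vk1`
is a subsolution of `Topt`, so `Vk1 ≤ Vst`.
-/

open Set Bornology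

theorem bddBelow_range_comp {ι κ α : Type*} [Preorder α] {V : κ → α} (hV : BddBelow (range V))
    (g : ι → κ) : BddBelow (range fun i ↦ V (g i)) :=
  hV.mono (range_comp_subset_range g V)

theorem bddAbove_range_sub {ι G : Type*} [AddCommGroup G] [Preorder G] [IsOrderedAddMonoid G]
    {V W : ι → G} (hV : BddAbove (range V)) (hW : BddBelow (range W)) :
    BddAbove (range fun i ↦ V i - W i) := by
  simpa only [sub_eq_add_neg] using hV.range_add hW.range_neg

theorem bddAbove_range_iInf_comp {ι κ S α : Type*} [Nonempty κ] [ConditionallyCompleteLattice α]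
    {V : S → α} (hV_below : BddBelow (range V)) (hV_above : BddAbove (range V)) (g : ι → κ → S) :
    BddAbove (range fun i ↦ ⨅ k, V (g i k)) := by
  obtain ⟨M, hM⟩ := hV_above
  refine ⟨M, forall_mem_range.2 fun i ↦ ?_⟩
  exact ciInf_le_of_le (bddBelow_range_comp hV_below (g i)) (Classical.arbitrary κ)
    (hM (mem_range_self _))

theorem le_of_subsolution_of_supersolution {S : Type*} {γ : ℝ} (hγ : γ < 1)
    {T : (S → ℝ) → S → ℝ} {V W : S → ℝ} (hbdd : BddAbove (range fun x ↦ V x - W x))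
    (hmono : ∀ c, (V ≤ fun y ↦ W y + c) → T V ≤ T fun y ↦ W y + c)
    (hdisc : ∀ c, 0 ≤ c → T (fun y ↦ W y + c) ≤ fun y ↦ T W y + γ * c)
    (hV : V ≤ T V) (hW : T W ≤ W) : V ≤ W := by
  intro x
  have : Nonempty S := ⟨x⟩
  set c := ⨆ y, V y - W y
  have gap_le (y : S) : V y - W y ≤ c := le_ciSup hbdd y
  suffices c_nonpos : c ≤ 0 by linarith [gap_le x]
  by_contra! c_pos
  have gap_le_mul (y : S) : V y - W y ≤ γ * c := by
    have : V y ≤ W y + γ * c := calc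
      V y ≤ T V y := hV y
      _ ≤ T (fun z ↦ W z + c) y := hmono c (fun z ↦ by linarith [gap_le z]) y
      _ ≤ T W y + γ * c := hdisc c c_pos.le y
      _ ≤ W y + γ * c := by gcongr; exact hW y
    linarith
  have c_le_mul : c ≤ γ * c := ciSup_le gap_le_mul
  exact absurd c_le_mul (mul_lt_of_lt_one_left c_pos hγ).not_ge

/-- The one-step safety value of a state with constraint value `r` whose continuation is worth `z`:
the function of `r` and `z` shared by `Tp` and `Topt`. -/
noncomputable def safetyBackup (γ r z : ℝ) : ℝ :=
  (1 - γ) * r + γ * min r z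

theorem safetyBackup_mono {γ : ℝ} (hγ : 0 ≤ γ) (r : ℝ) : Monotone (safetyBackup γ r) := by
  intro z w hzw
  unfold safetyBackup
  gcongr

theorem safetyBackup_add_le {γ c : ℝ} (hγ : 0 ≤ γ) (hc : 0 ≤ c) (r z : ℝ) :
    safetyBackup γ r (z + c) ≤ safetyBackup γ r z + γ * c := by
  have min_add_le : min r (z + c) ≤ min r z + c := by
    rw [← min_add_add_right]
    exact min_le_min_right _ (le_add_of_nonneg_right hc)
  calc
    safetyBackup γ r (z + c) ≤ (1 - γ) * r + γ * (min r z + c) := by unfold safetyBackup; gcongr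
    _ = safetyBackup γ r z + γ * c := by unfold safetyBackup; ring

section Operators

variable {S U A : Type*} {γ : ℝ} {V W : S → ℝ}

theorem tp_eq_safetyBackup (γ : ℝ) (f : S → U → A → S) (h : S → ℝ) (π : S → U) (V : S → ℝ) (x : S) :
    Tp γ f h π V x = safetyBackup γ (h x) (⨅ a, V (f x (π x) a)) :=
  rfl

theorem topt_eq_safetyBackup (γ : ℝ) (f : S → U → A → S) (h : S → ℝ) (V : S → ℝ) (x : S) :
    Topt γ f h V x = safetyBackup γ (h x) (⨆ u, ⨅ a, V (f x u a)) :=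
  rfl

theorem tp_mono (hγ : 0 ≤ γ) (f : S → U → A → S) (h : S → ℝ) (π : S → U)
    (hV : BddBelow (range V)) (hVW : V ≤ W) : Tp γ f h π V ≤ Tp γ f h π W := fun x ↦
  safetyBackup_mono hγ (h x) <| ciInf_mono (bddBelow_range_comp hV _) fun _ ↦ hVW _

theorem topt_mono [Nonempty A] (hγ : 0 ≤ γ) (f : S → U → A → S) (h : S → ℝ)
    (hV : BddBelow (range V)) (hW : BddAbove (range W)) (hVW : V ≤ W) :
    Topt γ f h V ≤ Topt γ f h W := fun x ↦
  have hW_below : BddBelow (range W) := hV.range_mono _ hVW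
  safetyBackup_mono hγ (h x) <| ciSup_mono (bddAbove_range_iInf_comp hW_below hW _) fun _ ↦
    ciInf_mono (bddBelow_range_comp hV _) fun _ ↦ hVW _

theorem tp_add_const_le [Nonempty A] (hγ : 0 ≤ γ) (f : S → U → A → S) (h : S → ℝ) (π : S → U)
    (hW : BddBelow (range W)) {c : ℝ} (hc : 0 ≤ c) :
    Tp γ f h π (fun y ↦ W y + c) ≤ fun y ↦ Tp γ f h π W y + γ * c := fun x ↦ by
  simp only [tp_eq_safetyBackup]
  rw [← ciInf_add (bddBelow_range_comp hW _)]
  exact safetyBackup_add_le hγ hc _ _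

theorem topt_add_const_le [Nonempty U] [Nonempty A] (hγ : 0 ≤ γ) (f : S → U → A → S) (h : S → ℝ)
    (hW : IsBounded (range W)) {c : ℝ} (hc : 0 ≤ c) :
    Topt γ f h (fun y ↦ W y + c) ≤ fun y ↦ Topt γ f h W y + γ * c := fun x ↦ by
  simp only [topt_eq_safetyBackup, ← ciInf_add (bddBelow_range_comp hW.bddBelow _)]
  rw [← ciSup_add (bddAbove_range_iInf_comp hW.bddBelow hW.bddAbove _)]
  exact safetyBackup_add_le hγ hc _ _

theorem tp_le_topt [Nonempty A] (hγ : 0 ≤ γ) (f : S → U → A → S) (h : S → ℝ) (π : S → U)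
    (hV : IsBounded (range V)) : Tp γ f h π V ≤ Topt γ f h V := fun x ↦
  safetyBackup_mono hγ (h x) <|
    le_ciSup (bddAbove_range_iInf_comp hV.bddBelow hV.bddAbove (f x)) (π x)

theorem le_of_le_tp_of_tp_le [Nonempty A] (hγ : γ ∈ Ico (0 : ℝ) 1) {f : S → U → A → S} {h : S → ℝ}
    {π : S → U} (hVb : IsBounded (range V)) (hWb : BddBelow (range W))
    (hV : V ≤ Tp γ f h π V) (hW : Tp γ f h π W ≤ W) : V ≤ W :=
  le_of_subsolution_of_supersolution hγ.2 (bddAbove_range_sub hVb.bddAbove hWb)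
    (fun _ ↦ tp_mono hγ.1 f h π hVb.bddBelow)
    (fun _ ↦ tp_add_const_le hγ.1 f h π hWb) hV hW

theorem le_of_le_topt_of_topt_le [Nonempty U] [Nonempty A] (hγ : γ ∈ Ico (0 : ℝ) 1)
    {f : S → U → A → S} {h : S → ℝ} (hVb : IsBounded (range V)) (hWb : IsBounded (range W))
    (hV : V ≤ Topt γ f h V) (hW : Topt γ f h W ≤ W) : V ≤ W :=
  have hWc (c : ℝ) : BddAbove (range fun y ↦ W y + c) :=
    hWb.bddAbove.range_comp_left (monotone_id.add_const c)
  le_of_subsolution_of_supersolution hγ.2 (bddAbove_range_sub hVb.bddAbove hWb.bddBelow)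
    (fun c ↦ topt_mono hγ.1 f h hVb.bddBelow (hWc c))
    (fun _ ↦ topt_add_const_le hγ.1 f h hWb) hV hW

end Operators

theorem policy_iteration_chain_general {S U A : Type*} [Nonempty A]
    (f : S → U → A → S) (h : S → ℝ)
    {γ : ℝ} (hγ : γ ∈ Ico (0 : ℝ) 1)
    (πk πk1 : S → U) (Vk Vk1 Vst : S → ℝ)
    (hVk_bdd : IsBounded (range Vk)) (hVk1_bdd : IsBounded (range Vk1))
    (hVst_bdd : IsBounded (range Vst))
    (hVk : Tp γ f h πk Vk = Vk)
    (himp : Tp γ f h πk1 Vk = Topt γ f h Vk)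
    (hVk1 : Tp γ f h πk1 Vk1 = Vk1)
    (hVst : Topt γ f h Vst = Vst) :
    ∀ x : S, Vk x ≤ Topt γ f h Vk x ∧ Topt γ f h Vk x ≤ Vk1 x ∧ Vk1 x ≤ Vst x := by
  intro x
  have : Nonempty U := ⟨πk x⟩
  have Vk_le_topt : Vk ≤ Topt γ f h Vk := hVk.ge.trans (tp_le_topt hγ.1 f h πk hVk_bdd)
  have Vk_le_Vk1 : Vk ≤ Vk1 :=
    le_of_le_tp_of_tp_le hγ hVk_bdd hVk1_bdd.bddBelow (Vk_le_topt.trans himp.ge) hVk1.le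
  have topt_le_Vk1 : Topt γ f h Vk ≤ Vk1 := calc
    Topt γ f h Vk = Tp γ f h πk1 Vk := himp.symm
    _ ≤ Tp γ f h πk1 Vk1 := tp_mono hγ.1 f h πk1 hVk_bdd.bddBelow Vk_le_Vk1
    _ = Vk1 := hVk1
  have Vk1_le_topt : Vk1 ≤ Topt γ f h Vk1 := hVk1.ge.trans (tp_le_topt hγ.1 f h πk1 hVk1_bdd)
  have Vk1_le_Vst : Vk1 ≤ Vst :=
    le_of_le_topt_of_topt_le hγ hVk1_bdd hVst_bdd Vk1_le_topt hVst.le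
  exact ⟨Vk_le_topt x, topt_le_Vk1 x, Vk1_le_Vst x⟩

theorem policy_iteration_chain {S U A : Type*} [Fintype S] [Nonempty S] [Fintype U] [Nonempty U] [Fintype A] [Nonempty A]
    (f : S → U → A → S) (h : S → ℝ)
    {γ : ℝ} (hγ : γ ∈ Set.Ioo (0 : ℝ) 1)
    (πk πk1 : S → U) (Vk Vk1 Vst : S → ℝ)
    (hVk : Tp γ f h πk Vk = Vk)
    (himp : Tp γ f h πk1 Vk = Topt γ f h Vk)
    (hVk1 : Tp γ f h πk1 Vk1 = Vk1)
    (hVst : Topt γ f h Vst = Vst) :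
    ∀ x : S, Vk x ≤ Topt γ f h Vk x ∧ Topt γ f h Vk x ≤ Vk1 x ∧ Vk1 x ≤ Vst x :=
  policy_iteration_chain_general f h (Ioo_subset_Ico_self hγ) πk πk1 Vk Vk1 Vst
    (finite_range Vk).isBounded (finite_range Vk1).isBounded (finite_range Vst).isBounded
    hVk himp hVk1 hVst
end
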